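/- Let G be a group acting on a set X, let k ≥ 2, let n ≥ 2k+1, and let A ⊆ Y ⊆ X with A nonempty. Suppose there exist elements a, a₀, a₁, …, a_{n-1} ∈ G such that Y = A ∪ a • A, the sets a₀ • A, …, a_{n-1} • A are pairwise disjoint, and Y is invariant under a and under each aᵢ. Then the elements a₁ a a₂⁻¹, a₃ a a₄⁻¹, …, a_{2k-1} a a_{2k}⁻¹ freely generate a free subgroup F of G of rank k (i.e., the group homomorphism from the free group on k generators to G sending the i-th generator to a_{2i-1} a a_{2i}⁻¹ is injective), and F acts freely on the set F • (a₀ • A) = ⋃_{h ∈ F} h • (a₀ • A). -/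

import Mathlib

open Pointwise

/-!
Since `Y = A ∪ a • A`, both `a` and `a⁻¹` carry `Y \ A` into `A`, so `g * a^{±1} * h⁻¹` carries
`Y \ h • A` into `g • A`. Index the letters of the free group by `ι × Bool`. Every letter `l` then
has its own set `b l • A`, into which it sends everything in `Y` outside the set of the inverse
letter. As these sets are disjoint, a nonempty reduced word sends any base set `D ⊆ Y` disjoint from
all of them into the set of its first letter, hence off `D`.
-/

section ActsFreelyOn

variable {G X : Type*} [Group G] [MulAction G X]

/-- The subgroup `H` acts freely on the set `S`: no nontrivial element of `H` fixes a point of `S`.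
The set `S` need not be invariant under `H`. -/
def ActsFreelyOn (H : Subgroup G) (S : Set X) : Prop :=
  ∀ h ∈ H, h ≠ 1 → ∀ z ∈ S, h • z ≠ z

theorem ActsFreelyOn.iUnion_smul {H : Subgroup G} {S : Set X} (hS : ActsFreelyOn H S) :
    ActsFreelyOn H (⋃ g ∈ H, g • S) := by
  intro h hh hne z hz hfix
  obtain ⟨g, hg, y, hy, rfl⟩ := Set.mem_iUnion₂.1 hz
  have conj_mem : g⁻¹ * h * g ∈ H := H.mul_mem (H.mul_mem (H.inv_mem hg) hh) hg
  have conj_ne_one : g⁻¹ * h * g ≠ 1 := by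
    simpa only [inv_inv] using (conj_eq_one_iff (a := g⁻¹) (b := h)).not.2 hne
  have conj_fix : (g⁻¹ * h * g) • y = y := by
    rw [mul_smul, mul_smul, inv_smul_eq_iff]
    exact hfix
  exact hS _ conj_mem conj_ne_one y hy conj_fix

end ActsFreelyOn

section PingPong

variable {ι G X : Type*} [Group G] [MulAction G X]

/-- A ping-pong table for the family `c` with base set `D`. The letter `l = (i, e)` stands for `c i`
if `e = true` and for `(c i)⁻¹` if `e = false`, as in `FreeGroup.mk`, so that `(i, !e)` is the
inverse letter; `P l` is the set that captures the image of `D` under any reduced word starting with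
`l`. -/
structure IsPingPong (c : ι → G) (P : ι × Bool → Set X) (D : Set X) : Prop where
  disjoint_base : ∀ l, Disjoint D (P l)
  smul_base_subset : ∀ l, FreeGroup.lift c (FreeGroup.mk [l]) • D ⊆ P l
  smul_subset : ∀ l m, m ≠ (l.1, !l.2) → FreeGroup.lift c (FreeGroup.mk [l]) • P m ⊆ P l

namespace IsPingPong

variable {c : ι → G} {P : ι × Bool → Set X} {D : Set X}

theorem lift_mk_cons_smul_subset (h : IsPingPong c P D) (l : ι × Bool) (L : List (ι × Bool))
    (hL : FreeGroup.IsReduced (l :: L)) :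
    FreeGroup.lift c (FreeGroup.mk (l :: L)) • D ⊆ P l := by
  induction L generalizing l with
  | nil => exact h.smul_base_subset l
  | cons m L ih =>
    obtain ⟨no_cancel, hmL⟩ := FreeGroup.isReduced_cons_cons.1 hL
    have hm : m ≠ (l.1, !l.2) := by
      rintro rfl
      exact Bool.self_ne_not _ (no_cancel rfl)
    calc FreeGroup.lift c (FreeGroup.mk (l :: m :: L)) • D
        = FreeGroup.lift c (FreeGroup.mk [l]) • FreeGroup.lift c (FreeGroup.mk (m :: L)) • D := by
          rw [smul_smul, ← map_mul, FreeGroup.mul_mk, List.singleton_append]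
      _ ⊆ FreeGroup.lift c (FreeGroup.mk [l]) • P m := Set.smul_set_mono (ih m hmL)
      _ ⊆ P l := h.smul_subset l m hm

theorem lift_smul_ne (h : IsPingPong c P D) {u : FreeGroup ι} (hu : u ≠ 1) {z : X} (hz : z ∈ D) :
    FreeGroup.lift c u • z ≠ z := by
  classical
  obtain ⟨l, L, hlL⟩ := List.exists_cons_of_ne_nil (FreeGroup.toWord_eq_nil_iff.not.2 hu)
  have u_smul_subset : FreeGroup.lift c u • D ⊆ P l := by
    rw [← FreeGroup.mk_toWord (x := u), hlL]
    exact h.lift_mk_cons_smul_subset l L (hlL ▸ FreeGroup.isReduced_toWord)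
  intro hfix
  have hzP : z ∈ P l := hfix ▸ u_smul_subset (Set.smul_mem_smul_set hz)
  exact Set.disjoint_left.1 (h.disjoint_base l) hz hzP

theorem injective_lift (h : IsPingPong c P D) (hD : D.Nonempty) :
    Function.Injective (FreeGroup.lift c) := by
  obtain ⟨z, hz⟩ := hD
  refine (injective_iff_map_eq_one _).2 fun u hu => ?_
  by_contra hne
  exact h.lift_smul_ne hne hz (by rw [hu, one_smul])

theorem actsFreelyOn_base (h : IsPingPong c P D) :
    ActsFreelyOn (Subgroup.closure (Set.range c)) D := by
  rw [← FreeGroup.range_lift_eq_closure]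
  rintro _ ⟨u, rfl⟩ hu z hz
  exact h.lift_smul_ne (ne_of_apply_ne (FreeGroup.lift c) (by rwa [map_one])) hz

end IsPingPong

end PingPong

section TwoTranslates

variable {ι G X : Type*} [Group G] [MulAction G X] {A Y : Set X} {a : G}

/-- The generators `a₁ a a₂⁻¹, a₃ a a₄⁻¹, …`, where `b (i, true)` and `b (i, false)` are the outer
elements of the `i`-th one, so that its inverse has the same shape with `a⁻¹` in the middle. -/
def twistedGenerator (a : G) (b : ι × Bool → G) (i : ι) : G :=
  b (i, true) * a * (b (i, false))⁻¹

theorem inv_smul_sdiff_subset (hY : Y ⊆ A ∪ a • A) : a⁻¹ • (Y \ A) ⊆ A := by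
  rw [← Set.subset_smul_set_iff]
  exact Set.sdiff_subset_iff.2 hY

theorem smul_sdiff_subset (hY : Y ⊆ A ∪ a • A) (ha : a • Y ⊆ Y) : a • (Y \ A) ⊆ A := by
  rw [Set.smul_set_sdiff, Set.sdiff_subset_iff, Set.union_comm]
  exact ha.trans hY

theorem mul_mul_inv_smul_sdiff_subset {g t h : G} (ht : t • (Y \ A) ⊆ A) (hh : h • Y = Y) :
    (g * t * h⁻¹) • (Y \ h • A) ⊆ g • A :=
  calc (g * t * h⁻¹) • (Y \ h • A) = (g * t * h⁻¹) • h • (Y \ A) := by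
        rw [Set.smul_set_sdiff (a := h), hh]
    _ = g • t • (Y \ A) := by rw [smul_smul, inv_mul_cancel_right, mul_smul]
    _ ⊆ g • A := Set.smul_set_mono ht

theorem lift_mk_singleton_smul_sdiff_subset {b : ι × Bool → G} (hY : Y ⊆ A ∪ a • A)
    (ha : a • Y ⊆ Y) (hb : ∀ l, b l • Y = Y) (l : ι × Bool) :
    FreeGroup.lift (twistedGenerator a b) (FreeGroup.mk [l]) • (Y \ b (l.1, !l.2) • A) ⊆
      b l • A := by
  obtain ⟨i, _ | _⟩ := l
  · have lift_inv_letter : FreeGroup.lift (twistedGenerator a b) (FreeGroup.mk [(i, false)]) =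
        b (i, false) * a⁻¹ * (b (i, true))⁻¹ := by
      simp [twistedGenerator, FreeGroup.lift_mk, mul_assoc]
    rw [lift_inv_letter]
    exact mul_mul_inv_smul_sdiff_subset (inv_smul_sdiff_subset hY) (hb _)
  · have lift_letter : FreeGroup.lift (twistedGenerator a b) (FreeGroup.mk [(i, true)]) =
        b (i, true) * a * (b (i, false))⁻¹ := by
      simp [twistedGenerator, FreeGroup.lift_mk]
    rw [lift_letter]
    exact mul_mul_inv_smul_sdiff_subset (smul_sdiff_subset hY ha) (hb _)

theorem isPingPong_of_eq_union_smul {D : Set X} {b : ι × Bool → G} (hY : Y = A ∪ a • A)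
    (hDY : D ⊆ Y) (hdisj : Pairwise fun l m => Disjoint (b l • A) (b m • A))
    (hD : ∀ l, Disjoint D (b l • A)) (ha : a • Y ⊆ Y) (hb : ∀ l, b l • Y = Y) :
    IsPingPong (twistedGenerator a b) (fun l => b l • A) D := by
  have letter_smul_subset : ∀ (l : ι × Bool) (S : Set X), S ⊆ Y → Disjoint S (b (l.1, !l.2) • A) →
      FreeGroup.lift (twistedGenerator a b) (FreeGroup.mk [l]) • S ⊆ b l • A := fun l S hSY hS =>
    (Set.smul_set_mono (Set.subset_sdiff.2 ⟨hSY, hS⟩)).trans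
      (lift_mk_singleton_smul_sdiff_subset hY.subset ha hb l)
  have hAY : A ⊆ Y := hY ▸ Set.subset_union_left
  have smul_A_subset : ∀ l, b l • A ⊆ Y := fun l => (Set.smul_set_mono hAY).trans (hb l).subset
  exact
    { disjoint_base := hD
      smul_base_subset := fun l => letter_smul_subset l D hDY (hD _)
      smul_subset := fun l m hm => letter_smul_subset l _ (smul_A_subset m) (hdisj hm) }

theorem stmt_8_general {D : Set X} {b : ι × Bool → G} (hY : Y = A ∪ a • A)
    (hDne : D.Nonempty) (hDY : D ⊆ Y)
    (hdisj : Pairwise fun l m => Disjoint (b l • A) (b m • A))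
    (hD : ∀ l, Disjoint D (b l • A)) (ha : a • Y ⊆ Y) (hb : ∀ l, b l • Y = Y) :
    Function.Injective (FreeGroup.lift (twistedGenerator a b)) ∧
      ActsFreelyOn (Subgroup.closure (Set.range (twistedGenerator a b)))
        (⋃ g ∈ Subgroup.closure (Set.range (twistedGenerator a b)), g • D) :=
  have pingPong := isPingPong_of_eq_union_smul hY hDY hdisj hD ha hb
  ⟨pingPong.injective_lift hDne, pingPong.actsFreelyOn_base.iUnion_smul⟩

end TwoTranslates

section LetterIndex

variable {k n : ℕ} (hn : 2 * k + 1 ≤ n)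

/-- The position in `a₀, …, a_{n-1}` of the element attached to a letter: `2i + 1` for the `i`-th
generator and `2i + 2` for its inverse, with `i` counted from `0`. -/
def letterIndex (l : Fin k × Bool) : Fin n :=
  ⟨2 * l.1 + cond l.2 1 2, by have := l.1.isLt; cases l.2 <;> simp only [cond] <;> omega⟩

theorem letterIndex_injective : Function.Injective (letterIndex hn) := by
  rintro ⟨i, _ | _⟩ ⟨j, _ | _⟩ h <;>
    simp only [letterIndex, cond, Prod.mk.injEq, Fin.ext_iff] at h ⊢ <;> grind

theorem zero_ne_letterIndex (l : Fin k × Bool) : ⟨0, by omega⟩ ≠ letterIndex hn l := by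
  obtain ⟨i, _ | _⟩ := l <;> simp [letterIndex]

end LetterIndex

theorem stmt_8 {G X : Type*} [Group G] [MulAction G X]
    (A Y : Set X) (hA : A.Nonempty) (hAY : A ⊆ Y)
    (k n : ℕ) (hk : 2 ≤ k) (hn : 2 * k + 1 ≤ n)
    (a : G) (b : Fin n → G)
    (hY : Y = A ∪ a • A)
    (hdisj : ∀ i j : Fin n, i ≠ j → Disjoint (b i • A) (b j • A))
    (ha : a • Y = Y) (hb : ∀ i : Fin n, b i • Y = Y) :
    Function.Injective
      (FreeGroup.lift (fun i : Fin k =>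
        b ⟨2 * i + 1, by have := i.isLt; omega⟩ * a *
          (b ⟨2 * i + 2, by have := i.isLt; omega⟩)⁻¹) : FreeGroup (Fin k) →* G) ∧
    ∀ h ∈ Subgroup.closure (Set.range fun i : Fin k =>
        b ⟨2 * i + 1, by have := i.isLt; omega⟩ * a *
          (b ⟨2 * i + 2, by have := i.isLt; omega⟩)⁻¹), h ≠ 1 →
      ∀ z ∈ ⋃ g ∈ (Subgroup.closure (Set.range fun i : Fin k =>
        b ⟨2 * i + 1, by have := i.isLt; omega⟩ * a *
          (b ⟨2 * i + 2, by have := i.isLt; omega⟩)⁻¹) : Subgroup G),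
        g • (b ⟨0, by omega⟩ • A), h • z ≠ z := by
  exact stmt_8_general (b := b ∘ letterIndex hn) hY hA.smul_set
    ((Set.smul_set_mono hAY).trans (hb _).subset)
    (fun _ _ hlm => hdisj _ _ ((letterIndex_injective hn).ne hlm))
    (fun l => hdisj _ _ (zero_ne_letterIndex hn l)) ha.subset (fun _ => hb _)
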